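/- arXiv:2208.04039 — 5 statements merged into one kernel-verified Lean document; each statement's English description precedes it below -/
import Mathlib

section
/- Let E be a real vector space, 1 < p < ∞, and let 𝒩 be a seminorm on E which is uniformly convex in the following sense: for every ε ∈ (0,2] there exists δ > 0 such that whenever 𝒩(u) = 𝒩(v) = 1 and 𝒩(u − v) ≥ ε, one has 𝒩((u+v)/2) ≤ 1 − δ. Then for every ε ∈ (0,2] there exists δ' > 0 such that whenever 𝒩(u) ≤ 1, 𝒩(v) ≤ 1 and 𝒩(u − v) ≥ ε, one has 𝒩((u+v)/2)^p ≤ (1 − δ') · (𝒩(u)^p + 𝒩(v)^p)/2. -/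
/-- The midpoint of `1` and `b` satisfies the power mean inequality. -/
lemma midpoint_one_rpow_le {p b : ℝ} (hp : 1 ≤ p) (hb : 0 ≤ b) :
    ((1 + b) / 2) ^ p ≤ (1 + b ^ p) / 2 := by
  have h := (convexOn_rpow hp).2 (Set.mem_Ici.mpr zero_le_one) (Set.mem_Ici.mpr hb)
    one_half_pos.le one_half_pos.le (add_halves 1)
  simp only [smul_eq_mul, Real.one_rpow] at h
  rw [show (1 / 2 * 1 + 1 / 2 * b : ℝ) = (1 + b) / 2 by ring] at h
  linarith

/-- The convexity gap of `t ↦ t ^ p` between `b` and `1` is bounded below uniformly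
for `b` away from `1`. -/
lemma exists_midpoint_rpow_le {p η : ℝ} (hp : 1 < p) (hη : 0 < η) (hη1 : η ≤ 1) :
    ∃ m > (0 : ℝ), ∀ b ∈ Set.Icc (0 : ℝ) (1 - η),
      ((1 + b) / 2) ^ p ≤ (1 - m) * ((1 + b ^ p) / 2) := by
  have hp0 : 0 ≤ p := by linarith
  have hcont : ContinuousOn (fun b : ℝ => (1 + b ^ p) / 2 - ((1 + b) / 2) ^ p)
      (Set.Icc 0 (1 - η)) := by
    have h₁ : Continuous fun b : ℝ => b ^ p := Real.continuous_rpow_const hp0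
    have h₂ : Continuous fun b : ℝ => ((1 + b) / 2) ^ p :=
      (Real.continuous_rpow_const hp0).comp (by fun_prop)
    exact (((continuous_const.add h₁).div_const 2).sub h₂).continuousOn
  obtain ⟨c, hc, hmin⟩ :=
    isCompact_Icc.exists_isMinOn (Set.nonempty_Icc.mpr (by linarith)) hcont
  refine ⟨(1 + c ^ p) / 2 - ((1 + c) / 2) ^ p, ?_, fun b hb => ?_⟩
  · have h := (strictConvexOn_rpow hp).2 (Set.mem_Ici.mpr zero_le_one)
      (Set.mem_Ici.mpr hc.1) (by linarith [hc.2]) one_half_pos one_half_pos (add_halves 1)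
    simp only [smul_eq_mul, Real.one_rpow] at h
    rw [show (1 / 2 * 1 + 1 / 2 * c : ℝ) = (1 + c) / 2 by ring] at h
    linarith
  · have hm := isMinOn_iff.mp hmin b hb
    have hb1 : b ^ p ≤ 1 := Real.rpow_le_one hb.1 (by linarith [hb.2]) hp0
    have hb0 : 0 ≤ b ^ p := Real.rpow_nonneg hb.1 p
    nlinarith [midpoint_one_rpow_le hp.le hc.1]

namespace Seminorm

variable {E : Type*} [AddCommGroup E] [Module ℝ E] (𝒩 : Seminorm ℝ E)

lemma map_smul_of_nonneg {c : ℝ} (hc : 0 ≤ c) (x : E) : 𝒩 (c • x) = c * 𝒩 x := by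
  rw [map_smul_eq_mul, Real.norm_of_nonneg hc]

lemma map_half_add_le (u v : E) : 𝒩 ((1 / 2 : ℝ) • (u + v)) ≤ (𝒩 u + 𝒩 v) / 2 := by
  rw [𝒩.map_smul_of_nonneg (by norm_num)]
  linarith [map_add_le_add 𝒩 u v]

/-- If the midpoint of `u` and the normalization of `v` lies at depth `δ` in the unit ball,
then the midpoint of `u` and `v` is controlled as well. -/
lemma map_half_add_le_of_normalized {u v : E} {δ : ℝ} (hu : 𝒩 u = 1) (hv0 : 0 < 𝒩 v)
    (hv1 : 𝒩 v ≤ 1) (h : 𝒩 ((1 / 2 : ℝ) • (u + (𝒩 v)⁻¹ • v)) ≤ 1 - δ) :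
    𝒩 ((1 / 2 : ℝ) • (u + v)) ≤ (1 + 𝒩 v) / 2 - 𝒩 v * δ := by
  have hsplit : (1 / 2 : ℝ) • (u + v) =
      𝒩 v • ((1 / 2 : ℝ) • (u + (𝒩 v)⁻¹ • v)) + ((1 - 𝒩 v) / 2) • u := by
    match_scalars
    · ring
    · field_simp
  rw [hsplit]
  refine (map_add_le_add 𝒩 _ _).trans ?_
  rw [𝒩.map_smul_of_nonneg hv0.le, 𝒩.map_smul_of_nonneg (by linarith) u, hu]
  nlinarith [mul_le_mul_of_nonneg_left h hv0.le]

/-- The `p`-th power form of uniform convexity when the larger vector is a unit vector. -/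
lemma exists_half_add_rpow_le_of_eq_one {p : ℝ} (hp : 1 < p)
    (huc : ∀ ε ∈ Set.Ioc (0 : ℝ) 2, ∃ δ > (0 : ℝ), ∀ u v : E,
      𝒩 u = 1 → 𝒩 v = 1 → ε ≤ 𝒩 (u - v) → 𝒩 ((1 / 2 : ℝ) • (u + v)) ≤ 1 - δ)
    {ε : ℝ} (hε : ε ∈ Set.Ioc (0 : ℝ) 2) :
    ∃ δ' > (0 : ℝ), ∀ u v : E, 𝒩 u = 1 → 𝒩 v ≤ 1 → ε ≤ 𝒩 (u - v) →
      𝒩 ((1 / 2 : ℝ) • (u + v)) ^ p ≤ (1 - δ') * ((1 + 𝒩 v ^ p) / 2) := by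
  obtain ⟨hε0, hε2⟩ := hε
  obtain ⟨m, hm0, hm⟩ := exists_midpoint_rpow_le hp (η := ε / 4) (by linarith) (by linarith)
  obtain ⟨δ, hδ0, hδ⟩ := huc (ε / 2) ⟨by linarith, by linarith⟩
  refine ⟨min m (δ / 2), lt_min hm0 (by linarith), fun u v hu hv huv => ?_⟩
  have hv0 : 0 ≤ 𝒩 v := apply_nonneg 𝒩 v
  have hmid0 : 0 ≤ 𝒩 ((1 / 2 : ℝ) • (u + v)) := apply_nonneg 𝒩 _
  have hmean : 0 ≤ (1 + 𝒩 v ^ p) / 2 := by positivity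
  rcases le_total (𝒩 v) (1 - ε / 4) with hb | hb
  · calc 𝒩 ((1 / 2 : ℝ) • (u + v)) ^ p ≤ ((1 + 𝒩 v) / 2) ^ p :=
          Real.rpow_le_rpow hmid0 (hu ▸ 𝒩.map_half_add_le u v) (by linarith)
      _ ≤ (1 - m) * ((1 + 𝒩 v ^ p) / 2) := hm _ ⟨hv0, hb⟩
      _ ≤ (1 - min m (δ / 2)) * ((1 + 𝒩 v ^ p) / 2) := by
          gcongr
          exact min_le_left _ _
  · have hv2 : 1 / 2 ≤ 𝒩 v := by linarith
    have hvpos : 0 < 𝒩 v := by linarith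
    have hw : 𝒩 ((𝒩 v)⁻¹ • v) = 1 := by
      rw [𝒩.map_smul_of_nonneg (inv_nonneg.mpr hv0), inv_mul_cancel₀ hvpos.ne']
    have hwv : 𝒩 ((𝒩 v)⁻¹ • v - v) = 1 - 𝒩 v := by
      have : (𝒩 v)⁻¹ • v - v = (1 - 𝒩 v) • ((𝒩 v)⁻¹ • v) := by
        match_scalars
        field_simp
      rw [this, 𝒩.map_smul_of_nonneg (by linarith), hw, mul_one]
    have hsep : ε / 2 ≤ 𝒩 (u - (𝒩 v)⁻¹ • v) := by
      have := map_add_le_add 𝒩 (u - (𝒩 v)⁻¹ • v) ((𝒩 v)⁻¹ • v - v)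
      rw [sub_add_sub_cancel, hwv] at this
      linarith
    have hδw := hδ u _ hu hw hsep
    have hδ1 : δ ≤ 1 := by linarith [apply_nonneg 𝒩 ((1 / 2 : ℝ) • (u + (𝒩 v)⁻¹ • v))]
    have hbound : 𝒩 ((1 / 2 : ℝ) • (u + v)) ≤ (1 - δ / 2) * ((1 + 𝒩 v) / 2) := by
      nlinarith [𝒩.map_half_add_le_of_normalized hu hvpos hv hδw]
    have hself : (1 - δ / 2) ^ p ≤ 1 - δ / 2 :=
      Real.rpow_le_self_of_le_one (by linarith) (by linarith) hp.le
    calc 𝒩 ((1 / 2 : ℝ) • (u + v)) ^ p ≤ ((1 - δ / 2) * ((1 + 𝒩 v) / 2)) ^ p :=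
          Real.rpow_le_rpow hmid0 hbound (by linarith)
      _ = (1 - δ / 2) ^ p * ((1 + 𝒩 v) / 2) ^ p :=
          Real.mul_rpow (by linarith) (by linarith)
      _ ≤ (1 - δ / 2) * ((1 + 𝒩 v ^ p) / 2) :=
          mul_le_mul hself (midpoint_one_rpow_le hp.le hv0) (by positivity) (by linarith)
      _ ≤ (1 - min m (δ / 2)) * ((1 + 𝒩 v ^ p) / 2) := by
          gcongr
          exact min_le_right _ _

/-- Rescaling reduces the case of a larger vector `u` in the unit ball to that of a unit vector. -/
lemma half_add_rpow_le_of_le {p ε δ : ℝ} (hε : 0 < ε)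
    (hδ : ∀ u v : E, 𝒩 u = 1 → 𝒩 v ≤ 1 → ε ≤ 𝒩 (u - v) →
      𝒩 ((1 / 2 : ℝ) • (u + v)) ^ p ≤ (1 - δ) * ((1 + 𝒩 v ^ p) / 2))
    {u v : E} (hu : 𝒩 u ≤ 1) (hvu : 𝒩 v ≤ 𝒩 u) (huv : ε ≤ 𝒩 (u - v)) :
    𝒩 ((1 / 2 : ℝ) • (u + v)) ^ p ≤ (1 - δ) * ((𝒩 u ^ p + 𝒩 v ^ p) / 2) := by
  have hu0 : 0 < 𝒩 u := by linarith [map_sub_le_add 𝒩 u v]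
  have hinv : 0 ≤ (𝒩 u)⁻¹ := inv_nonneg.mpr hu0.le
  have h := hδ ((𝒩 u)⁻¹ • u) ((𝒩 u)⁻¹ • v)
    (by rw [𝒩.map_smul_of_nonneg hinv, inv_mul_cancel₀ hu0.ne'])
    (by rw [𝒩.map_smul_of_nonneg hinv]; exact inv_mul_le_one_of_le₀ hvu hu0.le)
    (by
      rw [← smul_sub, 𝒩.map_smul_of_nonneg hinv]
      nlinarith [(one_le_inv₀ hu0).mpr hu])
  rw [← smul_add, smul_comm, 𝒩.map_smul_of_nonneg hinv, 𝒩.map_smul_of_nonneg hinv,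
    Real.mul_rpow hinv (apply_nonneg 𝒩 _), Real.mul_rpow hinv (apply_nonneg 𝒩 _),
    Real.inv_rpow hu0.le] at h
  have hup : 0 < 𝒩 u ^ p := Real.rpow_pos_of_pos hu0 p
  have h' := mul_le_mul_of_nonneg_left h hup.le
  rw [mul_inv_cancel_left₀ hup.ne'] at h'
  refine h'.trans_eq ?_
  field_simp

end Seminorm

theorem stmt2 {E : Type*} [AddCommGroup E] [Module ℝ E] (p : ℝ) (hp : 1 < p)
    (𝒩 : Seminorm ℝ E)
    (huc : ∀ ε ∈ Set.Ioc (0 : ℝ) 2, ∃ δ > (0 : ℝ), ∀ u v : E,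
      𝒩 u = 1 → 𝒩 v = 1 → ε ≤ 𝒩 (u - v) →
      𝒩 ((1 / 2 : ℝ) • (u + v)) ≤ 1 - δ) :
    ∀ ε ∈ Set.Ioc (0 : ℝ) 2, ∃ δ' > (0 : ℝ), ∀ u v : E,
      𝒩 u ≤ 1 → 𝒩 v ≤ 1 → ε ≤ 𝒩 (u - v) →
      (𝒩 ((1 / 2 : ℝ) • (u + v)) : ℝ) ^ p ≤ (1 - δ') * (((𝒩 u : ℝ) ^ p + (𝒩 v : ℝ) ^ p) / 2) := by
  intro ε hε
  obtain ⟨δ, hδ0, hδ⟩ := 𝒩.exists_half_add_rpow_le_of_eq_one hp huc hε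
  refine ⟨δ, hδ0, fun u v hu hv huv => ?_⟩
  rcases le_total (𝒩 v) (𝒩 u) with h | h
  · exact 𝒩.half_add_rpow_le_of_le hε.1 hδ hu h huv
  · rw [add_comm u v, add_comm (𝒩 u ^ p)]
    exact 𝒩.half_add_rpow_le_of_le hε.1 hδ hv h (by rwa [map_sub_rev])
end

section
/- Let E be a real vector space, 1 < p < ∞, and let 𝒩₁ and 𝒩₂ be seminorms on E such that for each i ∈ {1,2} and every ε ∈ (0,2] there exists δ > 0 with the property: 𝒩ᵢ(u) ≤ 1, 𝒩ᵢ(v) ≤ 1 and 𝒩ᵢ(u − v) ≥ ε imply 𝒩ᵢ((u+v)/2)^p ≤ (1 − δ) · (𝒩ᵢ(u)^p + 𝒩ᵢ(v)^p)/2. Assume moreover that ‖u‖ := (𝒩₁(u)^p + 𝒩₂(u)^p)^{1/p} defines a norm on E (i.e. ‖u‖ = 0 only for u = 0). Then ‖·‖ is uniformly convex: for every ε ∈ (0,2] there exists δ > 0 such that ‖u‖ = ‖v‖ = 1 and ‖u − v‖ ≥ ε imply ‖(u+v)/2‖ ≤ 1 − δ. -/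
/-- The `p`-th power of a seminorm is midpoint convex. -/
theorem Seminorm.rpow_midpoint_le {E : Type*} [AddCommGroup E] [Module ℝ E] (N : Seminorm ℝ E)
    {p : ℝ} (hp : 1 ≤ p) (u v : E) :
    N ((1 / 2 : ℝ) • (u + v)) ^ p ≤ (N u ^ p + N v ^ p) / 2 := by
  have hmid : N ((1 / 2 : ℝ) • (u + v)) ≤ (1 / 2 : ℝ) • N u + (1 / 2 : ℝ) • N v := by
    rw [map_smul_eq_mul, Real.norm_of_nonneg (by norm_num), smul_eq_mul, smul_eq_mul]
    linarith [map_add_le_add N u v]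
  have hconv := (convexOn_rpow hp).2 (apply_nonneg N u) (apply_nonneg N v)
    (by norm_num : (0 : ℝ) ≤ 1 / 2) (by norm_num : (0 : ℝ) ≤ 1 / 2) (by norm_num)
  have hmono := Real.rpow_le_rpow (apply_nonneg N _) hmid (by linarith : 0 ≤ p)
  simp only [smul_eq_mul] at hconv hmono
  linarith

/-- If `N` satisfies the `p`-th power form of uniform convexity at scale `ε`, then the midpoint of
two vectors on the unit sphere of the `ℓᵖ`-sum of `N` and `M` which are `ε`-separated for `N`
lies uniformly inside the unit ball. -/
theorem Seminorm.exists_rpow_add_rpow_midpoint_le {E : Type*} [AddCommGroup E] [Module ℝ E]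
    {p : ℝ} (hp : 1 ≤ p) (N M : Seminorm ℝ E) {ε : ℝ} (hε : 0 < ε)
    (h : ∃ δ > (0 : ℝ), ∀ u v : E, N u ≤ 1 → N v ≤ 1 → ε ≤ N (u - v) →
      N ((1 / 2 : ℝ) • (u + v)) ^ p ≤ (1 - δ) * ((N u ^ p + N v ^ p) / 2)) :
    ∃ d > (0 : ℝ), ∀ u v : E, N u ^ p + M u ^ p = 1 → N v ^ p + M v ^ p = 1 → ε ≤ N (u - v) →
      N ((1 / 2 : ℝ) • (u + v)) ^ p + M ((1 / 2 : ℝ) • (u + v)) ^ p ≤ 1 - d := by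
  obtain ⟨δ, hδ, h⟩ := h
  have hp0 : 0 < p := by linarith
  refine ⟨δ * ((ε / 2) ^ p / 2), by positivity, fun u v hu hv huv => ?_⟩
  have hle_one : ∀ w, N w ^ p + M w ^ p = 1 → N w ≤ 1 := fun w hw => by
    rw [← Real.rpow_le_rpow_iff (apply_nonneg N w) zero_le_one hp0, Real.one_rpow]
    linarith [Real.rpow_nonneg (apply_nonneg M w) p]
  have hNmid := h u v (hle_one u hu) (hle_one v hv) huv
  have hMmid := M.rpow_midpoint_le hp u v
  have hu0 := Real.rpow_nonneg (apply_nonneg N u) p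
  have hv0 := Real.rpow_nonneg (apply_nonneg N v) p
  have hlower : (ε / 2) ^ p ≤ N u ^ p + N v ^ p := by
    have hsub := map_sub_le_add N u v
    rcases le_total (ε / 2) (N u) with hc | hc
    · linarith [Real.rpow_le_rpow (by positivity) hc hp0.le]
    · linarith [Real.rpow_le_rpow (by positivity) (by linarith : ε / 2 ≤ N v) hp0.le]
  have hgain := mul_le_mul_of_nonneg_left hlower hδ.le
  linarith

theorem stmt3 {E : Type*} [AddCommGroup E] [Module ℝ E] (p : ℝ) (hp : 1 < p)
    (𝒩₁ 𝒩₂ : Seminorm ℝ E)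
    (h1 : ∀ ε ∈ Set.Ioc (0 : ℝ) 2, ∃ δ > (0 : ℝ), ∀ u v : E,
      𝒩₁ u ≤ 1 → 𝒩₁ v ≤ 1 → ε ≤ 𝒩₁ (u - v) →
      (𝒩₁ ((1 / 2 : ℝ) • (u + v)) : ℝ) ^ p
        ≤ (1 - δ) * (((𝒩₁ u : ℝ) ^ p + (𝒩₁ v : ℝ) ^ p) / 2))
    (h2 : ∀ ε ∈ Set.Ioc (0 : ℝ) 2, ∃ δ > (0 : ℝ), ∀ u v : E,
      𝒩₂ u ≤ 1 → 𝒩₂ v ≤ 1 → ε ≤ 𝒩₂ (u - v) →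
      (𝒩₂ ((1 / 2 : ℝ) • (u + v)) : ℝ) ^ p
        ≤ (1 - δ) * (((𝒩₂ u : ℝ) ^ p + (𝒩₂ v : ℝ) ^ p) / 2))
    (hnorm : ∀ u : E, ((𝒩₁ u : ℝ) ^ p + (𝒩₂ u : ℝ) ^ p) ^ (1 / p) = 0 → u = 0) :
    ∀ ε ∈ Set.Ioc (0 : ℝ) 2, ∃ δ > (0 : ℝ), ∀ u v : E,
      ((𝒩₁ u : ℝ) ^ p + (𝒩₂ u : ℝ) ^ p) ^ (1 / p) = 1 →
      ((𝒩₁ v : ℝ) ^ p + (𝒩₂ v : ℝ) ^ p) ^ (1 / p) = 1 →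
      ε ≤ ((𝒩₁ (u - v) : ℝ) ^ p + (𝒩₂ (u - v) : ℝ) ^ p) ^ (1 / p) →
      ((𝒩₁ ((1 / 2 : ℝ) • (u + v)) : ℝ) ^ p
          + (𝒩₂ ((1 / 2 : ℝ) • (u + v)) : ℝ) ^ p) ^ (1 / p) ≤ 1 - δ := by
  intro ε ⟨hε0, hε2⟩
  have hp0 : 0 < p := by linarith
  have hmem : ε / 2 ∈ Set.Ioc (0 : ℝ) 2 := ⟨by linarith, by linarith⟩
  obtain ⟨d₁, hd₁, H₁⟩ :=
    Seminorm.exists_rpow_add_rpow_midpoint_le hp.le 𝒩₁ 𝒩₂ hmem.1 (h1 _ hmem)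
  obtain ⟨d₂, hd₂, H₂⟩ :=
    Seminorm.exists_rpow_add_rpow_midpoint_le hp.le 𝒩₂ 𝒩₁ hmem.1 (h2 _ hmem)
  have hnonneg : ∀ w, 0 ≤ 𝒩₁ w ^ p + 𝒩₂ w ^ p := fun w =>
    add_nonneg (Real.rpow_nonneg (apply_nonneg _ _) _) (Real.rpow_nonneg (apply_nonneg _ _) _)
  refine ⟨1 / p * min d₁ d₂, mul_pos (by positivity) (lt_min hd₁ hd₂), fun u v hu hv huv => ?_⟩
  have hsphere : ∀ w, (𝒩₁ w ^ p + 𝒩₂ w ^ p) ^ (1 / p) = 1 → 𝒩₁ w ^ p + 𝒩₂ w ^ p = 1 :=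
    fun w hw => by
      rwa [one_div, Real.rpow_inv_eq (hnonneg w) zero_le_one hp0.ne', Real.one_rpow] at hw
  replace hu := hsphere u hu
  replace hv := hsphere v hv
  have hsum := huv.trans
    (Real.rpow_add_rpow_le_add (apply_nonneg 𝒩₁ (u - v)) (apply_nonneg 𝒩₂ (u - v)) hp.le)
  have hmid : 𝒩₁ ((1 / 2 : ℝ) • (u + v)) ^ p + 𝒩₂ ((1 / 2 : ℝ) • (u + v)) ^ p
      ≤ 1 - min d₁ d₂ := by
    rcases le_total (ε / 2) (𝒩₁ (u - v)) with hc | hc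
    · linarith [H₁ u v hu hv hc, min_le_left d₁ d₂]
    · linarith [H₂ u v (by linarith) (by linarith) (by linarith), min_le_right d₁ d₂]
  have hmid0 := hnonneg ((1 / 2 : ℝ) • (u + v))
  have hbern := rpow_one_add_le_one_add_mul_self (s := -min d₁ d₂) (by linarith)
    (by positivity : 0 ≤ 1 / p) ((div_le_one hp0).2 hp.le)
  have hroot := Real.rpow_le_rpow hmid0 hmid (by positivity : 0 ≤ 1 / p)
  rw [← sub_eq_add_neg] at hbern
  linarith
end

section
/- Let p ≥ 1, μ ≥ 1, ν > 0 and k > 0 be real numbers. For t ≥ 0 define g_{μ,ν}(t) := t^μ · (min{t,k})^ν and G_{μ,ν}(t) := ∫₀^t (g_{μ,ν}'(τ))^{1/p} dτ (the derivative exists for τ ≠ k and G_{μ,ν} is given explicitly by G_{μ,ν}(t) = p(μ+ν)^{1/p}/(μ+ν+p−1) · t^{(μ+ν+p−1)/p} for t ≤ k, and G_{μ,ν}(t) = p(μ+ν)^{1/p}/(μ+ν+p−1) · k^{(μ+ν+p−1)/p} + k^{ν/p} · pμ^{1/p}/(μ+p−1) · (t^{(μ+p−1)/p} − k^{(μ+p−1)/p})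 for t > k). Then for every t ≥ 0, G_{μ,ν}(t) ≥ p(μ+ν)^{1/p}/(μ+ν+p−1) · t^{(μ+p−1)/p} · (min{t,k})^{ν/p}. -/
/-- The function `G_{μ,ν}(t) = ∫₀^t (g_{μ,ν}'(τ))^{1/p} dτ` for
`g_{μ,ν}(t) = t^μ (min{t,k})^ν`, given by its explicit piecewise formula. -/
noncomputable def Gmunu (p μ ν k t : ℝ) : ℝ :=
  if t ≤ k then
    p * (μ + ν) ^ (1 / p) / (μ + ν + p - 1) * t ^ ((μ + ν + p - 1) / p)
  else
    p * (μ + ν) ^ (1 / p) / (μ + ν + p - 1) * k ^ ((μ + ν + p - 1) / p)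
      + k ^ (ν / p) * (p * μ ^ (1 / p) / (μ + p - 1))
        * (t ^ ((μ + p - 1) / p) - k ^ ((μ + p - 1) / p))

/-- The coefficient `x ^ (1 / p) / (x + p - 1)` is antitone in `x ≥ 1`. -/
lemma rpow_one_div_div_add_sub_one_le {p x y : ℝ} (hp : 1 ≤ p) (hx : 1 ≤ x) (hxy : x ≤ y) :
    y ^ (1 / p) / (y + p - 1) ≤ x ^ (1 / p) / (x + p - 1) := by
  have hx0 : 0 < x := by linarith
  have hp0 : 0 < p := by linarith
  have hxp : 0 < x + p - 1 := by linarith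
  have hs : 0 ≤ (y - x) / x := div_nonneg (by linarith) hx0.le
  have bernoulli : (1 + (y - x) / x) ^ (1 / p) ≤ 1 + 1 / p * ((y - x) / x) :=
    rpow_one_add_le_one_add_mul_self (by linarith) (by positivity)
      ((div_le_one hp0).2 hp)
  have hslope : 1 / p * ((y - x) / x) ≤ (y - x) / (x + p - 1) := by
    rw [div_mul_div_comm, one_mul]
    exact div_le_div_of_nonneg_left (by linarith) hxp
      (by nlinarith [mul_nonneg (sub_nonneg.2 hp) (sub_nonneg.2 hx)])
  have hy : y = x * (1 + (y - x) / x) := by field_simp; ring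
  have hpow : y ^ (1 / p) = x ^ (1 / p) * (1 + (y - x) / x) ^ (1 / p) := by
    conv_lhs => rw [hy]
    exact Real.mul_rpow hx0.le (by linarith)
  rw [div_le_iff₀ (by linarith), hpow, div_mul_eq_mul_div, mul_div_assoc]
  refine mul_le_mul_of_nonneg_left ?_ (by positivity)
  calc (1 + (y - x) / x) ^ (1 / p) ≤ 1 + (y - x) / (x + p - 1) := by linarith
    _ = (y + p - 1) / (x + p - 1) := by field_simp; ring

theorem stmt4 (p μ ν k : ℝ) (hp : 1 ≤ p) (hμ : 1 ≤ μ) (hν : 0 < ν) (hk : 0 < k) :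
    ∀ t ≥ (0 : ℝ),
      p * (μ + ν) ^ (1 / p) / (μ + ν + p - 1)
          * (t ^ ((μ + p - 1) / p) * (min t k) ^ (ν / p))
        ≤ Gmunu p μ ν k t := by
  intro t ht
  have hp0 : 0 < p := by linarith
  have hsplit : ∀ s : ℝ, 0 ≤ s →
      s ^ ((μ + ν + p - 1) / p) = s ^ ((μ + p - 1) / p) * s ^ (ν / p) := by
    intro s hs
    have hμp : 0 ≤ (μ + p - 1) / p := div_nonneg (by linarith) hp0.le
    rw [← Real.rpow_add_of_nonneg hs hμp (by positivity), ← add_div]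
    congr 2
    ring
  unfold Gmunu
  split_ifs with h
  · rw [min_eq_left h, hsplit t ht]
  · have hkt : k ≤ t := (not_le.1 h).le
    rw [min_eq_right hkt, hsplit k hk.le]
    have hcoef : p * (μ + ν) ^ (1 / p) / (μ + ν + p - 1) ≤ p * μ ^ (1 / p) / (μ + p - 1) := by
      rw [mul_div_assoc, mul_div_assoc]
      exact mul_le_mul_of_nonneg_left
        (rpow_one_div_div_add_sub_one_le hp hμ (by linarith)) hp0.le
    have hmono : k ^ ((μ + p - 1) / p) ≤ t ^ ((μ + p - 1) / p) :=
      Real.rpow_le_rpow hk.le hkt (div_nonneg (by linarith) hp0.le)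
    have hkν : 0 ≤ k ^ (ν / p) := by positivity
    linarith [mul_nonneg hkν (mul_nonneg (sub_nonneg.2 hcoef) (sub_nonneg.2 hmono))]
end

section
/- Let N ≥ 2 be an integer, 0 < s < 1, 1 < p with N > ps, p_s^* := Np/(N−ps), p < r < min{q, p_s^*}, β ∈ [0,∞), and suppose 0 < γ < γ_c := (r−p)(p_s^* + β(p_s^*−p))/((q−r)(p_s^*−p)). With D := p_s^* + β(p_s^*−p) + γ(p_s^*−q), s₁ := β(p_s^*−r)/D, s₂ := γ(p_s^*−r)/D and s₃ := (r + β(r−p) + γ(r−q))/D, one has (1/(1−s₂)) · ( p_s^* s₃ / p + s₁ ) > 1. -/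
theorem stmt10 (N : ℕ) (hN : 2 ≤ N) (s p q r β γ ps γc D s₁ s₂ s₃ : ℝ)
    (hs0 : 0 < s) (hs1 : s < 1) (hp : 1 < p) (hNps : p * s < N)
    (hps : ps = N * p / (N - p * s))
    (hpr : p < r) (hrq : r < q) (hrps : r < ps)
    (hβ : 0 ≤ β)
    (hγc : γc = (r - p) * (ps + β * (ps - p)) / ((q - r) * (ps - p)))
    (hγ0 : 0 < γ) (hγ : γ < γc)
    (hD : D = ps + β * (ps - p) + γ * (ps - q))
    (h1 : s₁ = β * (ps - r) / D)
    (h2 : s₂ = γ * (ps - r) / D)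
    (h3 : s₃ = (r + β * (r - p) + γ * (r - q)) / D) :
    1 < (1 / (1 - s₂)) * (ps * s₃ / p + s₁) := by
  have hP : 0 < ps - p := by linarith
  have hQ : 0 < q - r := by linarith
  have hA : 0 < ps + β * (ps - p) := by
    have := mul_nonneg hβ hP.le
    linarith
  have key : γ * ((q - r) * (ps - p)) < (r - p) * (ps + β * (ps - p)) := by
    rwa [hγc, lt_div_iff₀ (mul_pos hQ hP)] at hγ
  have hE : 0 < ps + β * (ps - p) - γ * (q - r) := by
    have h : (r - p) * (ps + β * (ps - p)) < (ps - p) * (ps + β * (ps - p)) :=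
      mul_lt_mul_of_pos_right (by linarith) hA
    have h' : 0 < (ps - p) * (ps + β * (ps - p) - γ * (q - r)) := by linarith
    exact pos_of_mul_pos_right h' hP.le
  have hD0 : 0 < D := by
    have := mul_pos hγ0 (sub_pos.2 hrps)
    rw [hD]
    linarith
  have hp0 : 0 < p := by linarith
  have e2 : 1 - s₂ = (ps + β * (ps - p) - γ * (q - r)) / D := by
    rw [h2, eq_div_iff hD0.ne', sub_mul, div_mul_cancel₀ _ hD0.ne', hD]
    ring
  have e3 : ps * s₃ / p + s₁ =
      (ps * (r + β * (r - p) + γ * (r - q)) + p * (β * (ps - r))) / p / D := by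
    rw [h3, h1]
    field_simp
  rw [e2, e3, one_div_mul_eq_div, div_div_div_cancel_right₀ hD0.ne', lt_div_iff₀ hE,
    lt_div_iff₀ hp0]
  linarith
end

section
/- Let (X, ‖·‖_X) and (Y, ‖·‖_Y) be real Banach spaces and ι : X → Y an injective continuous linear map (a continuous embedding of X into Y). Let Φ : X → ℝ be continuously Fréchet differentiable with Φ(0) = 0. Assume there exist ρ, α > 0 and e ∈ X such that ‖ι(e)‖_Y > ρ, Φ(e) < α, and Φ(u) ≥ α for all u ∈ X with ‖ι(u)‖_Y = ρ. Define Γ := { γ ∈ C([0,1]; X) : γ(0) = 0, γ(1) = e } and c := inf_{γ ∈ Γ} max_{t ∈ [0,1]} Φ(γ(t)). Then for every positive integer n there exists uₙ ∈ X such that c ≤ Φ(uₙ) ≤ c + 1/n and ‖Φ'(uₙ)‖_{X'} ≤ 2/n, where ‖Φ'(uₙ)‖_{X'} is the operator norm of the Fréchet derivative of Φ at uₙ. -/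
open unitInterval

open Filter Topology

/-- The weak form of Ekeland's variational principle. -/
theorem LowerSemicontinuous.exists_forall_sub_mul_dist_le {E : Type*} [MetricSpace E]
    [CompleteSpace E] {f : E → ℝ} (hf : LowerSemicontinuous f) {b : ℝ} (hb : ∀ x, b ≤ f x)
    {ε : ℝ} (hε : 0 < ε) (x₀ : E) :
    ∃ x, f x ≤ f x₀ ∧ ∀ y, f x - ε * dist y x ≤ f y := by
  have step : ∀ x, ∃ z, f z + ε * dist z x ≤ f x ∧
      ∀ y, f y + ε * dist y x ≤ f x → 2 * f z - f x ≤ f y := by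
    intro x
    set S : Set E := {y | f y + ε * dist y x ≤ f x} with hS
    have hxS : x ∈ S := by simp [hS]
    have hbdd : BddBelow (f '' S) := ⟨b, by rintro _ ⟨y, -, rfl⟩; exact hb y⟩
    have hle : ∀ y ∈ S, sInf (f '' S) ≤ f y := fun y hy => csInf_le hbdd ⟨y, hy, rfl⟩
    rcases (hle x hxS).eq_or_lt with h | h
    · exact ⟨x, hxS, fun y hy => by linarith [hle y hy]⟩
    · obtain ⟨_, ⟨z, hz, rfl⟩, hlt⟩ := exists_lt_of_csInf_lt (Set.Nonempty.image f ⟨x, hxS⟩)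
        (show sInf (f '' S) < (sInf (f '' S) + f x) / 2 by linarith)
      exact ⟨z, hz, fun y hy => by linarith [hle y hy]⟩
  choose g hg hg' using step
  let u : ℕ → E := fun n => g^[n] x₀
  have hu : ∀ n, u (n + 1) = g (u n) := fun n => Function.iterate_succ_apply' g n x₀
  have hdec : ∀ n, f (u (n + 1)) + ε * dist (u (n + 1)) (u n) ≤ f (u n) := fun n => by
    rw [hu]; exact hg _
  have hanti : Antitone (f ∘ u) := antitone_nat_of_succ_le fun n => by
    have := hdec n
    have h2 : 0 ≤ ε * dist (u (n + 1)) (u n) := by positivity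
    simp only [Function.comp]; linarith
  have hchain : ∀ n k, f (u (n + k)) + ε * dist (u (n + k)) (u n) ≤ f (u n) := by
    intro n k
    induction k with
    | zero => simp
    | succ k ih =>
      have h1 := hdec (n + k)
      have h2 := mul_le_mul_of_nonneg_left
        (dist_triangle (u (n + (k + 1))) (u (n + k)) (u n)) hε.le
      rw [← add_assoc] at h2 ⊢
      linarith
  have hlim : Tendsto (f ∘ u) atTop (𝓝 (⨅ n, (f ∘ u) n)) :=
    tendsto_atTop_ciInf hanti ⟨b, by rintro _ ⟨n, rfl⟩; exact hb _⟩
  set L := ⨅ n, (f ∘ u) n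
  have hL : ∀ n, L ≤ f (u n) := fun n => hanti.le_of_tendsto hlim n
  have hcauchy : CauchySeq u := by
    refine cauchySeq_of_le_tendsto_0' (fun n => (f (u n) - L) / ε) (fun n m hnm => ?_) ?_
    · obtain ⟨k, rfl⟩ := Nat.exists_eq_add_of_le hnm
      rw [le_div_iff₀ hε, dist_comm]
      linarith [hchain n k, hL (n + k)]
    · simpa using (hlim.sub_const L).div_const ε
  obtain ⟨x, hx⟩ := cauchySeq_tendsto_of_complete hcauchy
  have hxS : ∀ n, f x + ε * dist x (u n) ≤ f (u n) := by
    intro n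
    have hlsc : LowerSemicontinuous fun y => f y + ε * dist y (u n) :=
      hf.add (Continuous.lowerSemicontinuous (by fun_prop))
    refine (hlsc.isClosed_preimage (f (u n))).mem_of_tendsto hx ?_
    filter_upwards [eventually_ge_atTop n] with m hm
    obtain ⟨k, rfl⟩ := Nat.exists_eq_add_of_le hm
    exact hchain n k
  have hxle : ∀ n, f x ≤ f (u n) := fun n => by
    have : 0 ≤ ε * dist x (u n) := by positivity
    linarith [hxS n]
  refine ⟨x, hxle 0, fun y => ?_⟩
  by_contra! hy
  have hyS : ∀ n, 2 * f (u (n + 1)) - f (u n) ≤ f y := fun n => by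
    rw [hu]
    refine hg' _ y ?_
    have := mul_le_mul_of_nonneg_left (dist_triangle y x (u n)) hε.le
    linarith [hxS n]
  have hLy : 2 * L - L ≤ f y :=
    le_of_tendsto' (((hlim.comp (tendsto_add_atTop_nat 1)).const_mul 2).sub hlim) hyS
  have hxL : f x ≤ L := ge_of_tendsto' hlim hxle
  have : 0 ≤ ε * dist y x := by positivity
  linarith

section

variable {X : Type*} [NormedAddCommGroup X] [NormedSpace ℝ X]

/-- Along a compact path, a common direction field in which `Φ` decreases at rate more than `δ`
at every maximum point of `Φ`, and which vanishes on a closed set without maximum points. -/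
theorem exists_descent_field {T : Type*} [TopologicalSpace T] [CompactSpace T] [T2Space T]
    {Φ : X → ℝ} (hΦ : ContDiff ℝ 1 Φ) (γ : C(T, X)) {m δ : ℝ} {K : Set T} (hK : IsClosed K)
    (hKm : ∀ t ∈ K, Φ (γ t) ≠ m) (hδ : ∀ t, Φ (γ t) = m → δ < ‖fderiv ℝ Φ (γ t)‖) :
    ∃ v : C(T, X), (∀ t, ‖v t‖ ≤ 1) ∧ (∀ t ∈ K, v t = 0) ∧
      ∀ t, Φ (γ t) = m → fderiv ℝ Φ (γ t) (v t) < -δ := by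
  have hcont : Continuous fun t => Φ (γ t) := hΦ.continuous.comp γ.continuous
  have hcont' : Continuous fun t => fderiv ℝ Φ (γ t) :=
    (hΦ.continuous_fderiv one_ne_zero).comp γ.continuous
  let F : T → Set X := fun s => {w | ‖w‖ ≤ 1 ∧ (s ∈ K → w = 0) ∧
    (Φ (γ s) = m → fderiv ℝ Φ (γ s) w < -δ)}
  suffices h : ∃ v : C(T, X), ∀ s, v s ∈ F s by
    obtain ⟨v, hv⟩ := h
    exact ⟨v, fun t => (hv t).1, fun t => (hv t).2.1, fun t => (hv t).2.2⟩
  refine exists_continuous_forall_mem_convex_of_local_const ?_ ?_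
  · rintro s w₁ ⟨h1, h2, h3⟩ w₂ ⟨k1, k2, k3⟩ a b ha hb hab
    refine ⟨?_, fun hs => by simp [h2 hs, k2 hs], fun hs => ?_⟩
    · simpa using (convex_closedBall (0 : X) 1) (by simpa using h1) (by simpa using k1) ha hb hab
    · exact (convex_halfSpace_lt (fderiv ℝ Φ (γ s)).isLinear (-δ)) (h3 hs) (k3 hs) ha hb hab
  · intro s
    by_cases hs : Φ (γ s) = m
    · obtain ⟨w, hw, hlt⟩ : ∃ w : X, ‖w‖ ≤ 1 ∧ fderiv ℝ Φ (γ s) w < -δ := by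
        obtain ⟨w, hw, hlt⟩ := (fderiv ℝ Φ (γ s)).exists_lt_apply_of_lt_opNorm (hδ s hs)
        rcases lt_abs.1 (by simpa using hlt) with h | h
        · exact ⟨-w, by simpa using hw.le, by simpa using h⟩
        · exact ⟨w, hw.le, by linarith⟩
      have hsK : s ∈ Kᶜ := fun h => hKm s h hs
      refine ⟨w, ?_⟩
      filter_upwards [hK.isOpen_compl.mem_nhds hsK,
        (show Continuous fun t => fderiv ℝ Φ (γ t) w by fun_prop).continuousAt.eventually_lt
          continuousAt_const hlt] with t ht ht'
      exact ⟨hw, fun h => absurd h ht, fun _ => ht'⟩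
    · refine ⟨0, ?_⟩
      filter_upwards [hcont.continuousAt.eventually_ne hs] with t ht
      exact ⟨by simp, fun _ => rfl, fun h => absurd h ht⟩

/-- Moving along a descent field lowers the maximum of `Φ` along a compact path linearly. -/
theorem exists_pos_forall_lt_of_descent_field {T : Type*} [TopologicalSpace T] [CompactSpace T]
    {Φ : X → ℝ} (hΦ : ContDiff ℝ 1 Φ) (γ v : C(T, X)) {m δ ε : ℝ} (hε : ε < δ)
    (hm : ∀ t, Φ (γ t) ≤ m) (hv : ∀ t, ‖v t‖ ≤ 1)
    (hvδ : ∀ t, Φ (γ t) = m → fderiv ℝ Φ (γ t) (v t) < -δ) :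
    ∃ h > 0, ∀ t, Φ (γ t + h • v t) < m - ε * h := by
  have hΦc := hΦ.continuous
  have key : ∀ᶠ h in 𝓝 (0 : ℝ), ∀ t ∈ (Set.univ : Set T),
      0 < h → Φ (γ t + h • v t) < m - ε * h := by
    refine isCompact_univ.eventually_forall_of_forall_eventually fun s _ => ?_
    by_cases hs : Φ (γ s) = m
    · have hstrict : HasStrictFDerivAt Φ (fderiv ℝ Φ (γ s)) (γ s) :=
        hΦ.contDiffAt.hasStrictFDerivAt one_ne_zero
      have hlo := hstrict.isLittleO.def (sub_pos.2 hε)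
      have htend : Tendsto (fun z : ℝ × T => (γ z.2 + z.1 • v z.2, γ z.2)) (𝓝 (0, s))
          (𝓝 (γ s, γ s)) := by
        have : Continuous fun z : ℝ × T => (γ z.2 + z.1 • v z.2, γ z.2) := by fun_prop
        simpa using this.tendsto (0, s)
      have hlt : ∀ᶠ z : ℝ × T in 𝓝 (0, s), fderiv ℝ Φ (γ s) (v z.2) < -δ :=
        (show Continuous fun z : ℝ × T => fderiv ℝ Φ (γ s) (v z.2) by
          fun_prop).continuousAt.eventually_lt continuousAt_const (hvδ s hs)
      filter_upwards [htend.eventually hlo, hlt] with ⟨h, t⟩ h1 h2 hpos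
      simp only [add_sub_cancel_left, map_smul, smul_eq_mul, norm_smul, Real.norm_eq_abs,
        abs_of_pos hpos] at h1 h2
      have h3 := (le_abs_self _).trans h1
      have h4 : (δ - ε) * (h * ‖v t‖) ≤ (δ - ε) * (h * 1) := by
        have := sub_pos.2 hε
        gcongr
        exact hv t
      have h5 := mul_lt_mul_of_pos_left h2 hpos
      linarith [hm t]
    · have hlt : Φ (γ s) < m := lt_of_le_of_ne (hm s) hs
      have hcont : Continuous fun z : ℝ × T => Φ (γ z.2 + z.1 • v z.2) := by fun_prop
      have hcont' : Continuous fun z : ℝ × T => m - ε * z.1 := by fun_prop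
      filter_upwards [hcont.continuousAt.eventually_lt (x₀ := ((0 : ℝ), s))
        hcont'.continuousAt (by simpa using hlt)] with z hz _
      exact hz
  obtain ⟨h, hh, hpos⟩ := ((key.filter_mono nhdsWithin_le_nhds).and
    (self_mem_nhdsWithin : Set.Ioi (0 : ℝ) ∈ 𝓝[>] 0)).exists
  exact ⟨h, hpos, fun t => hh t trivial hpos⟩

/-- A minimax principle for paths with fixed endpoints: if every path between `a` and `b` meets
values of `Φ` above those at the endpoints, then below the maximum level of any given path there
is a path whose maximum is attained at an almost critical point. -/
theorem exists_path_max_fderiv_le [CompleteSpace X] {Φ : X → ℝ} (hΦ : ContDiff ℝ 1 Φ)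
    {a b : X} {α : ℝ} (ha : Φ a < α) (hb : Φ b < α)
    (hα : ∀ γ : C(I, X), γ 0 = a → γ 1 = b → α ≤ ⨆ t, Φ (γ t))
    {δ : ℝ} (hδ : 0 < δ) (γ₀ : C(I, X)) (h₀ : γ₀ 0 = a) (h₁ : γ₀ 1 = b) :
    ∃ γ : C(I, X), γ 0 = a ∧ γ 1 = b ∧ (⨆ t, Φ (γ t)) ≤ ⨆ t, Φ (γ₀ t) ∧
      ∃ t, Φ (γ t) = ⨆ s, Φ (γ s) ∧ ‖fderiv ℝ Φ (γ t)‖ ≤ δ := by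
  have hbdd : ∀ γ : C(I, X), BddAbove (Set.range fun t => Φ (γ t)) := fun γ =>
    (isCompact_range (hΦ.continuous.comp γ.continuous)).bddAbove
  have hmax : ∀ γ : C(I, X), ∃ t, Φ (γ t) = ⨆ s, Φ (γ s) := fun γ =>
    (isCompact_range (hΦ.continuous.comp γ.continuous)).sSup_mem (Set.range_nonempty _)
  let Γ : Set C(I, X) := {γ | γ 0 = a ∧ γ 1 = b}
  have hΓ : IsClosed Γ :=
    (isClosed_eq (continuous_eval_const 0) continuous_const).inter
      (isClosed_eq (continuous_eval_const 1) continuous_const)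
  have : CompleteSpace Γ := hΓ.completeSpace_coe
  have hlsc : LowerSemicontinuous fun γ : Γ => ⨆ t, Φ (γ.1 t) :=
    lowerSemicontinuous_ciSup (fun γ => hbdd γ.1) fun t =>
      (hΦ.continuous.comp ((continuous_eval_const t).comp
        continuous_subtype_val)).lowerSemicontinuous
  obtain ⟨⟨γ, hγ0, hγ1⟩, hle, hek⟩ := hlsc.exists_forall_sub_mul_dist_le
    (fun γ => hα γ.1 γ.2.1 γ.2.2) (half_pos hδ) ⟨γ₀, h₀, h₁⟩
  refine ⟨γ, hγ0, hγ1, hle, ?_⟩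
  by_contra! hcon
  have hαγ := hα γ hγ0 hγ1
  obtain ⟨v, hv1, hv0, hvδ⟩ := exists_descent_field hΦ γ (K := {0, 1})
    (Set.toFinite _).isClosed
    (by rintro t (rfl | rfl) <;> simp only [hγ0, hγ1] <;> linarith) hcon
  obtain ⟨h, hpos, hh⟩ := exists_pos_forall_lt_of_descent_field hΦ γ v (half_lt_self hδ)
    (fun t => le_ciSup (hbdd γ) t) hv1 hvδ
  have hη := hek ⟨γ + h • v, by simp [hγ0, hv0], by simp [hγ1, hv0]⟩
  have hdist : dist (γ + h • v) γ ≤ h := by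
    refine (ContinuousMap.dist_le hpos.le).2 fun t => ?_
    simpa [norm_smul, abs_of_pos hpos] using mul_le_of_le_one_right hpos.le (hv1 t)
  obtain ⟨t, ht⟩ := hmax (γ + h • v)
  have hlt := hh t
  have hmul := mul_le_mul_of_nonneg_left hdist (half_pos hδ).le
  simp only [Subtype.dist_eq] at hη
  simp only [ContinuousMap.add_apply, ContinuousMap.smul_apply] at ht hη
  linarith

end

theorem stmt13 {X Y : Type*}
    [NormedAddCommGroup X] [NormedSpace ℝ X] [CompleteSpace X]
    [NormedAddCommGroup Y] [NormedSpace ℝ Y] [CompleteSpace Y]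
    (ι : X →L[ℝ] Y) (hι : Function.Injective ι)
    (Φ : X → ℝ) (hΦ : ContDiff ℝ 1 Φ) (hΦ0 : Φ 0 = 0)
    (ρ α : ℝ) (hρ : 0 < ρ) (hα : 0 < α) (e : X)
    (he : ρ < ‖ι e‖) (hΦe : Φ e < α)
    (hmtn : ∀ u : X, ‖ι u‖ = ρ → α ≤ Φ u)
    (c : ℝ)
    (hc : c = sInf { m : ℝ | ∃ γ : C(unitInterval, X),
        γ 0 = 0 ∧ γ 1 = e ∧ m = ⨆ t : unitInterval, Φ (γ t) }) :
    ∀ n : ℕ, 0 < n → ∃ u : X,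
      c ≤ Φ u ∧ Φ u ≤ c + 1 / (n : ℝ) ∧ ‖fderiv ℝ Φ u‖ ≤ 2 / (n : ℝ) := by
  intro n hn
  have hn' : (0 : ℝ) < n := by exact_mod_cast hn
  have hsup : ∀ γ : C(I, X), γ 0 = 0 → γ 1 = e → α ≤ ⨆ t, Φ (γ t) := by
    intro γ h0 h1
    obtain ⟨t, ht⟩ := intermediate_value_univ (0 : I) 1
      (show Continuous fun t => ‖ι (γ t)‖ by fun_prop)
      (show ρ ∈ Set.Icc _ _ by simp [h0, h1, hρ.le, he.le])
    exact (hmtn _ ht).trans (le_ciSup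
      (isCompact_range (hΦ.continuous.comp γ.continuous)).bddAbove t)
  set S := { m : ℝ | ∃ γ : C(unitInterval, X),
    γ 0 = 0 ∧ γ 1 = e ∧ m = ⨆ t : unitInterval, Φ (γ t) }
  have hSne : S.Nonempty :=
    ⟨_, ⟨fun t => (t : ℝ) • e, by fun_prop⟩, by simp, by simp, rfl⟩
  have hSbdd : BddBelow S := ⟨α, by rintro _ ⟨γ, h0, h1, rfl⟩; exact hsup γ h0 h1⟩
  obtain ⟨_, ⟨γ₀, h0, h1, rfl⟩, hlt⟩ := exists_lt_of_csInf_lt hSne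
    (show sInf S < c + 1 / (n : ℝ) by rw [← hc]; linarith [one_div_pos.2 hn'])
  obtain ⟨γ, hγ0, hγ1, hle, t, ht, hfd⟩ := exists_path_max_fderiv_le hΦ
    (by rwa [hΦ0]) hΦe hsup (show (0 : ℝ) < 2 / n by positivity) γ₀ h0 h1
  refine ⟨γ t, ?_, ?_, hfd⟩
  · rw [ht, hc]
    exact csInf_le hSbdd ⟨γ, hγ0, hγ1, rfl⟩
  · rw [ht]
    exact hle.trans hlt.le
end
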